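/- Let X be a set, Y a Banach space, Φ : X → Y, and suppose the image Φ(X) is contained in a compact subset of Y and Φ(X) ⊆ C where C ⊆ Y is a nonempty closed bounded convex set with Φ : C → C continuous. Then Φ has a fixed point in C. (Schauder fixed point theorem in the form used: a continuous self-map of a nonempty closed convex subset of a Banach space with precompact image has a fixed point.) -/

import Mathlib

/-!
A Schauder projection `y ↦ ∑ i, ρ i y • p i`, built from a partition of unity subordinate to a
finite cover of `closure (Φ '' C)` by small balls centred at points `p i ∈ Φ '' C`, moves points of
`Φ '' C` only slightly. Composed with `Φ` it factors through a standard simplex, so Brouwer's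
theorem there yields approximate fixed points of `Φ`, and these accumulate at a fixed point because
`Φ '' C` is relatively compact.

Brouwer's theorem on the simplex follows from a covering theorem: if closed sets `F i` cover the
simplex, some `x` lies in `F i` for every `i` with `x i ≠ 0`; apply it to `F i = {x | x i ≤ f x i}`.
The covering theorem is the limit of a statement about coloured lattice points, which comes from
Scarf's lemma. Instead of triangulating the simplex, Scarf's argument uses the finite sets that are
dominant for the coordinate orders as cells, and walks through doors as in Sperner's lemma.
-/

open Filter Finset Function
open scoped Topology

namespace SchauderFixedPoint

section Counting

variable {α β : Type*} [DecidableEq α] [DecidableEq β]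

lemma image_erase_eq_image_iff {s : Finset α} {f : α → β} {x : α} (hx : x ∈ s) :
    (s.erase x).image f = s.image f ↔ ∃ y ∈ s, y ≠ x ∧ f y = f x := by
  have himage : s.image f = insert (f x) ((s.erase x).image f) := by
    rw [← image_insert, insert_erase hx]
  rw [himage, eq_comm, insert_eq_self]
  simp only [mem_image, mem_erase]
  grind

lemma card_filter_exists_ne_map_eq {s : Finset α} {f : α → β} (h : #(s.image f) + 1 = #s) :
    #{x ∈ s | ∃ y ∈ s, y ≠ x ∧ f y = f x} = 2 := by
  have injOn_erase {x : α} (hx : x ∈ s) (hcol : ∃ y ∈ s, y ≠ x ∧ f y = f x) :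
      Set.InjOn f (s.erase x) := by
    rw [← card_image_iff, (image_erase_eq_image_iff hx).2 hcol, card_erase_of_mem hx, ← h,
      Nat.add_sub_cancel]
  obtain ⟨a, ha, b, hb, hfab, hab⟩ : ∃ a ∈ s, ∃ b ∈ s, f a = f b ∧ a ≠ b := by
    by_contra! hinj
    have := card_image_of_injOn (s := s) (f := f) fun a ha b hb => hinj a ha b hb
    lia
  have hinja := injOn_erase ha ⟨b, hb, hab.symm, hfab.symm⟩
  have hpair : {x ∈ s | ∃ y ∈ s, y ≠ x ∧ f y = f x} = {a, b} := by
    ext x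
    simp only [mem_filter, mem_insert, mem_singleton]
    refine ⟨fun ⟨hx, y, hy, hyx, hfyx⟩ => ?_, ?_⟩
    · by_contra! hx'
      have hxa : x ∈ (s.erase a : Set α) := by simp [hx, hx'.1]
      by_cases hya : y = a
      · exact hx'.2 (hinja hxa (by simp [hb, hab.symm]) (by rw [← hfyx, hya, hfab]))
      · exact hyx (hinja (by simp [hy, hya]) hxa hfyx)
    · rintro (rfl | rfl)
      · exact ⟨ha, b, hb, hab.symm, hfab.symm⟩
      · exact ⟨hb, a, ha, hab, hfab⟩
  rw [hpair, card_pair hab]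

lemma even_card_filter_image_erase_eq [Fintype β] {s : Finset α} {f : α → β} (b : β)
    (hs : #s = Fintype.card β) (hf : s.image f ≠ univ) :
    Even #{x ∈ s | (s.erase x).image f = univ.erase b} := by
  rcases Finset.eq_empty_or_nonempty {x ∈ s | (s.erase x).image f = univ.erase b} with
    hempty | ⟨x, hx⟩
  · simp [hempty]
  obtain ⟨-, hx⟩ := mem_filter.1 hx
  have himage : s.image f = univ.erase b := by
    have hsub : univ.erase b ⊆ s.image f := hx ▸ image_subset_image (erase_subset x s)
    refine (hsub.antisymm fun c hc => mem_erase.2 ⟨?_, mem_univ c⟩).symm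
    rintro rfl
    refine hf (univ_subset_iff.1 ?_)
    rw [← insert_erase (mem_univ c)]
    exact insert_subset hc hsub
  have hcard : #(s.image f) + 1 = #s := by
    rw [himage, card_erase_add_one (mem_univ b), card_univ, hs]
  rw [← himage, filter_congr fun x hx => image_erase_eq_image_iff hx,
    card_filter_exists_ne_map_eq hcard]
  exact even_two

lemma sum_card_insert_mem_eq_sum_card_erase_mem [Fintype α] (𝒜 ℬ : Finset (Finset α)) :
    ∑ s ∈ 𝒜, #{x | x ∉ s ∧ insert x s ∈ ℬ} = ∑ t ∈ ℬ, #{x ∈ t | t.erase x ∈ 𝒜} := by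
  rw [← card_sigma, ← card_sigma]
  refine card_bij' (fun p _ => ⟨insert p.2 p.1, p.2⟩) (fun p _ => ⟨p.1.erase p.2, p.2⟩) ?_ ?_ ?_ ?_
  all_goals
    simp only [mem_sigma, mem_filter, mem_univ, true_and]
    rintro ⟨s, x⟩ h
  · simpa [erase_insert h.2.1, h.1] using h.2.2
  · simpa [insert_erase h.2.1, h.1] using h.2.2
  · simp [erase_insert h.2.1]
  · simp [insert_erase h.2.1]

end Counting

section Dominant

variable {I V α : Type*} [LinearOrder α]

/-- A finite set `S` of vertices is *dominant* for the heights `k i : V → α`, `i : I`, if no vertex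
lies strictly above the lowest point of `S` in every height. These sets play the role of the
simplices of a triangulation in Scarf's argument. -/
def IsDominant (k : I → V → α) (S : Finset V) : Prop :=
  ∀ y, ∃ i, ∀ x ∈ S, k i y ≤ k i x

/-- `m i` is a lowest point of `S` for the height `k i`, for every `i`. -/
def IsMinSelector (k : I → V → α) (S : Finset V) (m : I → V) : Prop :=
  ∀ i, m i ∈ S ∧ ∀ x ∈ S, k i (m i) ≤ k i x

/-- `x` is a highest vertex for `k p` among those lying strictly above `m l` for every other height
`k l`. The peaks of a minimum selector of `S` are the candidates for enlarging a dominant set `S`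
by one vertex. -/
def IsPeak (k : I → V → α) (m : I → V) (p : I) (x : V) : Prop :=
  (∀ l ≠ p, k l (m l) < k l x) ∧ ∀ y, (∀ l ≠ p, k l (m l) < k l y) → k p y ≤ k p x

variable {k : I → V → α} {S : Finset V} {m : I → V} {p q : I} {x y : V}

lemma IsDominant.mono {R : Finset V} (hR : IsDominant k R) (hSR : S ⊆ R) : IsDominant k S :=
  fun y => (hR y).imp fun _ hi x hx => hi x (hSR hx)

lemma exists_isMinSelector (k : I → V → α) (hS : S.Nonempty) : ∃ m, IsMinSelector k S m := by
  choose m hmem hmin using fun i => exists_min_image S (k i) hS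
  exact ⟨m, fun i => ⟨hmem i, hmin i⟩⟩

lemma IsDominant.exists_le_selector (hS : IsDominant k S) (hm : IsMinSelector k S m) (y : V) :
    ∃ i, k i y ≤ k i (m i) :=
  (hS y).imp fun i hi => hi (m i) (hm i).1

lemma IsMinSelector.image_univ_eq [Fintype I] [DecidableEq V] (hm : IsMinSelector k S m)
    (hk : ∀ i, Injective (k i)) (hS : IsDominant k S) : univ.image m = S := by
  ext y
  simp only [mem_image, mem_univ, true_and]
  refine ⟨fun ⟨i, hi⟩ => hi ▸ (hm i).1, fun hy => ?_⟩
  obtain ⟨i, hi⟩ := hS.exists_le_selector hm y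
  exact ⟨i, hk i (((hm i).2 y hy).antisymm hi)⟩

lemma exists_isPeak [Finite V] (h : ∃ y, ∀ l ≠ p, k l (m l) < k l y) : ∃ x, IsPeak k m p x := by
  classical
  have := Fintype.ofFinite V
  obtain ⟨y, hy⟩ := h
  obtain ⟨x, hx, hmax⟩ := exists_max_image {y | ∀ l ≠ p, k l (m l) < k l y} (k p)
    ⟨y, mem_filter_univ y |>.2 hy⟩
  exact ⟨x, (mem_filter_univ x).1 hx, fun z hz => hmax z ((mem_filter_univ z).2 hz)⟩

lemma IsPeak.vertex_unique (hk : ∀ i, Injective (k i)) (hx : IsPeak k m p x)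
    (hy : IsPeak k m p y) : x = y :=
  hk p ((hy.2 x hx.1).antisymm (hx.2 y hy.1))

lemma IsPeak.index_unique (hm : IsMinSelector k S m) (hS : IsDominant k S) (hp : IsPeak k m p x)
    (hq : IsPeak k m q x) : p = q := by
  obtain ⟨l, hl⟩ := hS.exists_le_selector hm x
  by_contra hpq
  by_cases hlp : l = p
  · exact hl.not_gt (hq.1 l (hlp ▸ hpq))
  · exact hl.not_gt (hp.1 l hlp)

lemma IsPeak.notMem (hx : IsPeak k m p x) (hm : IsMinSelector k S m) (hk : ∀ i, Injective (k i))
    (hS : IsDominant k S) (hqp : q ≠ p) (hmqp : m q = m p) : x ∉ S := by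
  intro hxS
  obtain ⟨i, hi⟩ := hS.exists_le_selector hm x
  have hmi : m i = x := hk i (((hm i).2 x hxS).antisymm hi)
  by_cases hip : i = p
  · exact (hx.1 q hqp).ne (by rw [hmqp, ← hip, hmi])
  · exact (hx.1 i hip).ne (by rw [hmi])

lemma IsPeak.isDominant_insert [DecidableEq V] (hx : IsPeak k m p x) (hm : IsMinSelector k S m)
    (hS : IsDominant k S) : IsDominant k (insert x S) := by
  have hxp : k p x ≤ k p (m p) := by
    obtain ⟨i, hi⟩ := hS.exists_le_selector hm x
    by_cases hip : i = p
    · exact hip ▸ hi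
    · exact absurd hi (hx.1 i hip).not_ge
  intro y
  simp only [forall_mem_insert]
  by_cases hy : ∀ l ≠ p, k l (m l) < k l y
  · exact ⟨p, hx.2 y hy, fun z hz => (hx.2 y hy).trans (hxp.trans ((hm p).2 z hz))⟩
  · push Not at hy
    obtain ⟨l, hlp, hyl⟩ := hy
    exact ⟨l, hyl.trans (hx.1 l hlp).le, fun z hz => hyl.trans ((hm l).2 z hz)⟩

lemma exists_isPeak_of_isDominant_insert [Fintype I] [DecidableEq V] (hk : ∀ i, Injective (k i))
    (hm : IsMinSelector k S m) (hcard : #S + 1 = Fintype.card I) (hxS : x ∉ S)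
    (hdom : IsDominant k (insert x S)) : ∃ p, (∃ q ≠ p, m q = m p) ∧ IsPeak k m p x := by
  obtain ⟨n, hn⟩ := exists_isMinSelector k (insert_nonempty x S)
  have himage : univ.image n = insert x S := hn.image_univ_eq hk hdom
  have hinj : Injective n := by
    rw [← Set.injOn_univ, ← coe_univ, ← card_image_iff, himage, card_insert_of_notMem hxS, hcard,
      card_univ]
  obtain ⟨p, -, hp⟩ := mem_image.1 (himage ▸ mem_insert_self x S)
  have hnm {l : I} (hl : l ≠ p) : n l = m l := by
    have hnl : n l ∈ S := (mem_insert.1 (hn l).1).resolve_left fun h => hl (hinj (h.trans hp.symm))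
    exact hk l (((hn l).2 _ (mem_insert_of_mem (hm l).1)).antisymm ((hm l).2 _ hnl))
  obtain ⟨q, -, hq⟩ := mem_image.1 (himage ▸ mem_insert_of_mem (hm p).1 : m p ∈ univ.image n)
  have hqp : q ≠ p := by
    rintro rfl
    exact hxS (hp ▸ hq ▸ (hm q).1)
  refine ⟨p, ⟨q, hqp, (hnm hqp).symm.trans hq⟩, fun l hl => ?_, fun y hy => ?_⟩
  · rw [← hnm hl]
    refine ((hn l).2 x (mem_insert_self x S)).lt_of_ne fun h => hl (hinj ?_)
    rw [hp, hk l h]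
  · obtain ⟨l, hl⟩ := hdom.exists_le_selector hn y
    by_cases hlp : l = p
    · rwa [hlp, hp] at hl
    · exact absurd (hy l hlp) (hnm hlp ▸ hl).not_gt

open Classical in
/-- The vertices by which `S` can be enlarged to a dominant set. -/
noncomputable def completions [Fintype V] (k : I → V → α) (S : Finset V) : Finset V :=
  {x | x ∉ S ∧ IsDominant k (insert x S)}

lemma mem_completions [Fintype V] [DecidableEq V] :
    x ∈ completions k S ↔ x ∉ S ∧ IsDominant k (insert x S) := by
  unfold completions
  convert mem_filter_univ x

-- The completions of `S` correspond to the two heights that share their lowest point of `S`.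
lemma card_completions_eq_two [Fintype I] [Fintype V] (hk : ∀ i, Injective (k i))
    (hS : IsDominant k S) (hne : S.Nonempty) (hcard : #S + 1 = Fintype.card I)
    (habove : ∀ i, ∃ y, ∀ l ≠ i, ∃ x ∈ S, k l x < k l y) : #(completions k S) = 2 := by
  classical
  obtain ⟨m, hm⟩ := exists_isMinSelector k hne
  have hpeak (p : I) : ∃ x, IsPeak k m p x := by
    obtain ⟨y, hy⟩ := habove p
    refine exists_isPeak ⟨y, fun l hl => ?_⟩
    obtain ⟨x, hx, hxy⟩ := hy l hl
    exact ((hm l).2 x hx).trans_lt hxy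
  choose X hX using hpeak
  have hcard_image : #(univ.image m) + 1 = #(univ : Finset I) := by
    rw [hm.image_univ_eq hk hS, hcard, card_univ]
  rw [← card_filter_exists_ne_map_eq hcard_image]
  refine (card_bij (fun p _ => X p) (fun p hp => ?_) (fun p _ q _ hpq => ?_) fun x hx => ?_).symm
  · obtain ⟨-, q, -, hqp, hmqp⟩ := mem_filter.1 hp
    exact mem_completions.2
      ⟨(hX p).notMem hm hk hS hqp hmqp, (hX p).isDominant_insert hm hS⟩
  · exact (hX p).index_unique hm hS (hpq ▸ hX q)
  · obtain ⟨hxS, hdom⟩ := mem_completions.1 hx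
    obtain ⟨p, ⟨q, hqp, hmqp⟩, hp⟩ := exists_isPeak_of_isDominant_insert hk hm hcard hxS hdom
    exact ⟨p, mem_filter.2 ⟨mem_univ p, q, mem_univ q, hqp, hmqp⟩, (hX p).vertex_unique hk hp⟩

end Dominant

section SlackFacet

variable {I V α : Type*} [LinearOrder α]

/-- The vertices `s i` are *slack*: `s i` is the unique lowest vertex for the height `k i`, and it
is above every non-slack vertex for all other heights. They play the role of the vertices of a large
simplex surrounding the remaining vertices. -/
structure IsSlack (k : I → V → α) (s : I → V) : Prop where
  lt_of_ne : ∀ i v, v ≠ s i → k i (s i) < k i v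
  lt_of_notMem_range : ∀ t ∉ Set.range s, ∀ i j, j ≠ i → k j t < k j (s i)

variable {k : I → V → α} {s : I → V}

lemma IsSlack.le (hs : IsSlack k s) (i : I) (v : V) : k i (s i) ≤ k i v := by
  by_cases h : v = s i
  · rw [h]
  · exact (hs.lt_of_ne i v h).le

variable [Fintype I] [DecidableEq I] [DecidableEq V]

/-- All slack vertices but `s o`: the facet of the surrounding simplex through which Scarf's walk
enters. -/
def slackFacet (s : I → V) (o : I) : Finset V :=
  (univ.erase o).image s

lemma mem_slackFacet {o : I} {v : V} : v ∈ slackFacet s o ↔ ∃ j ≠ o, s j = v := by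
  simp [slackFacet]

lemma IsSlack.isDominant_insert_slackFacet (hs : IsSlack k s) {o : I} {x : V}
    (hmax : ∀ y ∉ Set.range s, k o y ≤ k o x) : IsDominant k (insert x (slackFacet s o)) := by
  intro y
  by_cases hy : y ∈ Set.range s
  · obtain ⟨j, rfl⟩ := hy
    exact ⟨j, fun v _ => hs.le j v⟩
  · refine ⟨o, (forall_mem_insert _ _ _).2 ⟨hmax y hy, fun v hv => ?_⟩⟩
    obtain ⟨j, hj, rfl⟩ := mem_slackFacet.1 hv
    exact (hs.lt_of_notMem_range y hy j o hj.symm).le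

lemma IsSlack.mem_completions_slackFacet_iff [Fintype V] (hs : IsSlack k s)
    (ht : ∃ t, t ∉ Set.range s) {o : I} {x : V} : x ∈ completions k (slackFacet s o) ↔
      x ∉ Set.range s ∧ ∀ y ∉ Set.range s, k o y ≤ k o x := by
  rw [mem_completions]
  refine ⟨fun ⟨hx, hdom⟩ => ?_, fun ⟨hx, hmax⟩ => ⟨fun hmem => ?_,
    hs.isDominant_insert_slackFacet hmax⟩⟩
  · have hbelow {y : V} (hy : y ∉ Set.range s) : k o y ≤ k o x ∧ s o ≠ x := by
      obtain ⟨i, hi⟩ := hdom y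
      have hnot : s i ∉ insert x (slackFacet s o) := fun hmem =>
        (hi _ hmem).not_gt (hs.lt_of_ne i y fun h => hy ⟨i, h.symm⟩)
      obtain rfl : i = o := by
        by_contra hio
        exact hnot (mem_insert_of_mem (mem_slackFacet.2 ⟨i, hio, rfl⟩))
      exact ⟨hi x (mem_insert_self x _), fun h => hnot (h ▸ mem_insert_self _ _)⟩
    refine ⟨?_, fun y hy => (hbelow hy).1⟩
    rintro ⟨j, rfl⟩
    obtain ⟨t, ht⟩ := ht
    by_cases hj : j = o
    · exact (hbelow ht).2 (hj ▸ rfl)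
    · exact hx (mem_slackFacet.2 ⟨j, hj, rfl⟩)
  · obtain ⟨j, -, hj⟩ := mem_slackFacet.1 hmem
    exact hx ⟨j, hj⟩

lemma IsSlack.card_completions_slackFacet [Fintype V] (hs : IsSlack k s)
    (hk : ∀ i, Injective (k i)) (ht : ∃ t, t ∉ Set.range s) (o : I) :
    #(completions k (slackFacet s o)) = 1 := by
  obtain ⟨t, htr⟩ := ht
  obtain ⟨x, hx, hmax⟩ := exists_max_image {t | t ∉ Set.range s} (k o)
    ⟨t, (mem_filter_univ t).2 htr⟩
  simp only [mem_filter_univ] at hx hmax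
  refine card_eq_one.2 ⟨x, ext fun y => ?_⟩
  rw [hs.mem_completions_slackFacet_iff ⟨t, htr⟩, mem_singleton]
  refine ⟨fun ⟨hy, hymax⟩ => hk o ((hmax y hy).antisymm (hymax x hx)), ?_⟩
  rintro rfl
  exact ⟨hx, hmax⟩

lemma exists_mem_notMem_range_of_ne_slackFacet {c : V → I} {o : I} {S : Finset V}
    (hcs : LeftInverse c s) (hS : S.image c = univ.erase o) (hne : S ≠ slackFacet s o) :
    ∃ t ∈ S, t ∉ Set.range s := by
  by_contra! hrange
  have hsc : ∀ v ∈ S, s (c v) = v := fun v hv => by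
    obtain ⟨j, rfl⟩ := hrange v hv
    rw [hcs j]
  refine hne ?_
  rw [slackFacet, ← hS, image_image, image_congr (f := s ∘ c) (g := id) hsc, image_id]

end SlackFacet

section Doors

variable {I V α : Type*} [LinearOrder α] [Fintype I] [Fintype V]

open Classical in
/-- The doors of Scarf's walk: the dominant sets with one vertex of each colour other than `o`. -/
noncomputable def doors (k : I → V → α) (c : V → I) (o : I) : Finset (Finset V) :=
  {S | IsDominant k S ∧ S.image c = univ.erase o ∧ #S + 1 = Fintype.card I}

open Classical in
/-- The rooms of Scarf's walk: the dominant sets with as many vertices as there are colours. -/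
noncomputable def rooms (k : I → V → α) : Finset (Finset V) :=
  {R | IsDominant k R ∧ #R = Fintype.card I}

variable {k : I → V → α} {s : I → V} {c : V → I} {o : I}

lemma mem_doors [DecidableEq I] {S : Finset V} : S ∈ doors k c o ↔
    IsDominant k S ∧ S.image c = univ.erase o ∧ #S + 1 = Fintype.card I := by
  unfold doors
  convert mem_filter_univ S

lemma mem_rooms {R : Finset V} : R ∈ rooms k ↔ IsDominant k R ∧ #R = Fintype.card I := by
  simp [rooms]

lemma sum_card_completions_doors [DecidableEq I] [DecidableEq V] (k : I → V → α) (c : V → I)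
    (o : I) : ∑ S ∈ doors k c o, #(completions k S) =
      ∑ R ∈ rooms k, #{x ∈ R | (R.erase x).image c = univ.erase o} := by
  have hcompletions : ∀ S ∈ doors k c o,
      #(completions k S) = #{x | x ∉ S ∧ insert x S ∈ rooms k} := by
    intro S hS
    congr 1
    ext x
    simp only [mem_completions, mem_filter_univ, mem_rooms, and_congr_right_iff, iff_self_and]
    intro hx _
    rw [card_insert_of_notMem hx, (mem_doors.1 hS).2.2]
  have hdoors : ∀ R ∈ rooms k, #{x ∈ R | R.erase x ∈ doors k c o} =
      #{x ∈ R | (R.erase x).image c = univ.erase o} := by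
    intro R hR
    obtain ⟨hdom, hcard⟩ := mem_rooms.1 hR
    congr 1
    refine filter_congr fun x hx => ?_
    rw [mem_doors, card_erase_add_one hx]
    simp only [hdom.mono (erase_subset x R), hcard, true_and, and_true]
  rw [sum_congr rfl hcompletions, sum_card_insert_mem_eq_sum_card_erase_mem, sum_congr rfl hdoors]

lemma IsSlack.slackFacet_mem_doors [DecidableEq I] [DecidableEq V] (hs : IsSlack k s)
    (hk : ∀ i, Injective (k i)) (hcs : LeftInverse c s) (ht : ∃ t, t ∉ Set.range s) (o : I) :
    slackFacet s o ∈ doors k c o := by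
  have hcompletion : (completions k (slackFacet s o)).Nonempty := by
    rw [← card_pos, hs.card_completions_slackFacet hk ht]
    exact one_pos
  obtain ⟨x, hx⟩ := hcompletion
  refine mem_doors.2 ⟨(mem_completions.1 hx).2.mono (subset_insert x _), ?_, ?_⟩
  · rw [slackFacet, image_image, hcs.comp_eq_id, image_id]
  · rw [slackFacet, card_image_of_injective _ hcs.injective, card_erase_add_one (mem_univ o),
      card_univ]

lemma IsSlack.odd_sum_card_completions_doors (hs : IsSlack k s) (hk : ∀ i, Injective (k i))
    (hcs : LeftInverse c s) (ht : ∃ t, t ∉ Set.range s) (o : I) :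
    Odd (∑ S ∈ doors k c o, #(completions k S)) := by
  classical
  rw [← sum_erase_add _ _ (hs.slackFacet_mem_doors hk hcs ht o),
    hs.card_completions_slackFacet hk ht]
  refine Even.add_one (Finset.even_sum _ fun S hS => ?_)
  obtain ⟨hne, hS⟩ := mem_erase.1 hS
  obtain ⟨hdom, himage, hcard⟩ := mem_doors.1 hS
  obtain ⟨t, htS, ht⟩ := exists_mem_notMem_range_of_ne_slackFacet hcs himage hne
  have habove (i : I) : ∃ y, ∀ l ≠ i, ∃ x ∈ S, k l x < k l y :=
    ⟨s i, fun l hl => ⟨t, htS, hs.lt_of_notMem_range t ht i l hl⟩⟩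
  rw [card_completions_eq_two hk hdom ⟨t, htS⟩ hcard habove]
  exact even_two

end Doors

section Scarf

variable {I V α : Type*} [LinearOrder α] {k : I → V → α} {s : I → V} {c : V → I}

lemma IsSlack.exists_isDominant_surjOn_of_injective [Finite I] [Finite V] (hs : IsSlack k s)
    (hk : ∀ i, Injective (k i)) (hcs : LeftInverse c s) (ht : ∃ t, t ∉ Set.range s) :
    ∃ R : Finset V, IsDominant k R ∧ Set.SurjOn c R Set.univ := by
  classical
  have := Fintype.ofFinite I
  have := Fintype.ofFinite V
  by_contra! hno
  obtain ⟨t, htr⟩ := ht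
  have hodd := hs.odd_sum_card_completions_doors hk hcs ⟨t, htr⟩ (c t)
  rw [sum_card_completions_doors] at hodd
  refine Nat.not_even_iff_odd.2 hodd (Finset.even_sum _ fun R hR => ?_)
  obtain ⟨hdom, hcard⟩ := mem_rooms.1 hR
  refine even_card_filter_image_erase_eq (c t) hcard fun himage => hno R hdom fun i _ => ?_
  exact mem_image.1 (himage ▸ mem_univ i)

-- Ties between heights are broken by an arbitrary enumeration of the vertices.
lemma IsSlack.exists_isDominant_surjOn [Finite I] [Finite V] (hs : IsSlack k s)
    (hcs : LeftInverse c s) (ht : ∃ t, t ∉ Set.range s) :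
    ∃ R : Finset V, IsDominant k R ∧ Set.SurjOn c R Set.univ := by
  let k' (i : I) (v : V) : α ×ₗ Fin (Nat.card V) := toLex (k i v, Finite.equivFin V v)
  have hlt {i : I} {v w : V} (h : k i v < k i w) : k' i v < k' i w :=
    Prod.Lex.toLex_lt_toLex.2 (Or.inl h)
  have hinj (i : I) : Injective (k' i) := fun v w h =>
    (Finite.equivFin V).injective (congrArg (fun z => (ofLex z).2) h)
  have hs' : IsSlack k' s :=
    ⟨fun i v hv => hlt (hs.lt_of_ne i v hv),
      fun t ht i j hj => hlt (hs.lt_of_notMem_range t ht i j hj)⟩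
  obtain ⟨R, hdom, hsurj⟩ := hs'.exists_isDominant_surjOn_of_injective hinj hcs ht
  refine ⟨R, fun y => (hdom y).imp fun i hi x hx => ?_, hsurj⟩
  exact le_of_not_gt fun h => (hi x hx).not_gt (hlt h)

open Classical in
/-- The heights `k` on `T`, extended by one slack vertex for each index. -/
noncomputable def withSlack {T : Type*} (k : I → T → α) (i : I) : T ⊕ I → WithBot (WithTop α) :=
  Sum.elim (fun t => ((k i t : WithTop α) : WithBot (WithTop α))) fun j => if j = i then ⊥ else ⊤

lemma isSlack_withSlack {T : Type*} (k : I → T → α) : IsSlack (withSlack k) Sum.inr where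
  lt_of_ne i v hv := by
    rcases v with t | j
    · simp [withSlack]
    · have hji : j ≠ i := fun h => hv (h ▸ rfl)
      simp [withSlack, hji]
  lt_of_notMem_range v hv i j hj := by
    rcases v with t | l
    · simpa [withSlack, hj.symm] using WithBot.coe_lt_coe.2 (WithTop.coe_lt_top (k j t))
    · exact absurd ⟨l, rfl⟩ hv

-- Scarf's lemma, with the slack vertices replaced by the set `J` of the indices of those not used.
theorem exists_dominant_surjOn [Finite I] {T : Type*} [Finite T] [Nonempty T] (k : I → T → α)
    (c : T → I) :
    ∃ (σ : Finset T) (J : Finset I), Set.SurjOn c σ J ∧ ∀ y, ∃ i ∈ J, ∀ x ∈ σ, k i y ≤ k i x := by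
  classical
  have := Fintype.ofFinite I
  obtain ⟨R, hdom, hsurj⟩ := (isSlack_withSlack k).exists_isDominant_surjOn
    (c := Sum.elim c id) (fun _ => rfl) ⟨Sum.inl (Classical.arbitrary T), by simp⟩
  refine ⟨R.toLeft, R.toRightᶜ, fun i hi => ?_, fun y => ?_⟩
  · obtain ⟨t | j, hv, hvi⟩ := hsurj (Set.mem_univ i)
    · exact ⟨t, mem_toLeft.2 hv, hvi⟩
    · obtain rfl : j = i := hvi
      exact absurd (mem_toRight.2 hv) (mem_compl.1 hi)
  · obtain ⟨i, hi⟩ := hdom (Sum.inl y)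
    refine ⟨i, mem_compl.2 fun hmem => ?_, fun x hx => ?_⟩
    · simpa [withSlack] using hi _ (mem_toRight.1 hmem)
    · simpa [withSlack] using hi _ (mem_toLeft.1 hx)

end Scarf

section Brouwer

variable {I : Type*} [Fintype I]

lemma exists_ge_sum_eq [Nonempty I] {a : I → ℕ} {N : ℕ} (h : ∑ i, a i ≤ N) :
    ∃ y, a ≤ y ∧ ∑ i, y i = N := by
  classical
  refine ⟨a + Pi.single (Classical.arbitrary I) (N - ∑ i, a i), le_self_add, ?_⟩
  simp [sum_add_distrib, h]

lemma exists_cell_bounds [Nonempty I] {N : ℕ} {σ : Finset (I → ℕ)} {J : Finset I}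
    (hne : σ.Nonempty) (hσ : ∀ t ∈ σ, ∑ i, t i = N)
    (hdom : ∀ y : I → ℕ, ∑ i, y i = N → ∃ i ∈ J, ∀ x ∈ σ, y i ≤ x i) :
    ∃ μ : I → ℕ, (∀ i ∉ J, μ i = 0) ∧
      ∀ t ∈ σ, ∀ i, μ i ≤ t i ∧ t i ≤ μ i + Fintype.card I := by
  classical
  let μ (i : I) : ℕ := if i ∈ J then σ.inf' hne (fun t => t i) else 0
  have hμ : ∀ t ∈ σ, μ ≤ t := fun t ht i => by
    by_cases hi : i ∈ J
    · simpa only [μ, hi, if_true] using inf'_le (fun t => t i) ht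
    · simp only [μ, hi, if_false, Nat.zero_le]
  have hN : N < ∑ i, μ i + Fintype.card I := by
    by_contra! hle
    obtain ⟨y, hμy, hy⟩ : ∃ y, μ + 1 ≤ y ∧ ∑ i, y i = N :=
      exists_ge_sum_eq (by simpa [sum_add_distrib] using hle)
    obtain ⟨i, hi, hyi⟩ := hdom y hy
    have hyμ : y i ≤ μ i := by simpa only [μ, hi, if_true] using le_inf' hne _ hyi
    exact (hμy i).not_gt (Nat.lt_succ_of_le hyμ)
  refine ⟨μ, fun i hi => if_neg hi, fun t ht i => ⟨hμ t ht i, ?_⟩⟩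
  have hsum_erase : ∑ j ∈ univ.erase i, μ j ≤ ∑ j ∈ univ.erase i, t j :=
    sum_le_sum fun j _ => hμ t ht j
  have hsum_t := add_sum_erase univ t (mem_univ i)
  have hsum_μ := add_sum_erase univ μ (mem_univ i)
  have := hσ t ht
  lia

theorem exists_lattice_point_near_colors (N : ℕ) (c : (I → ℕ) → I) :
    ∃ t : I → ℕ, ∑ i, t i = N ∧ ∀ i, t i ≤ Fintype.card I ∨
      ∃ t' : I → ℕ, ∑ j, t' j = N ∧ c t' = i ∧ ∀ j, |(t j : ℝ) - t' j| ≤ Fintype.card I := by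
  classical
  have : Nonempty I := ⟨c 0⟩
  have hmem {t : I → ℕ} : t ∈ piAntidiag univ N ↔ ∑ i, t i = N := by simp
  obtain ⟨z, -, hz⟩ : ∃ z : I → ℕ, 0 ≤ z ∧ ∑ i, z i = N := exists_ge_sum_eq (by simp)
  have : Nonempty (piAntidiag (univ : Finset I) N) := ⟨z, hmem.2 hz⟩
  obtain ⟨σ, J, hsurj, hdom⟩ := exists_dominant_surjOn
    (fun i (t : piAntidiag (univ : Finset I) N) => t.1 i) fun t => c t
  have hσ : ∀ t ∈ σ.map (.subtype _), ∑ i, t i = N := by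
    simp only [Finset.mem_map]
    rintro _ ⟨t, -, rfl⟩
    exact hmem.1 t.2
  have hdom' (y : I → ℕ) (hy : ∑ i, y i = N) : ∃ i ∈ J, ∀ x ∈ σ.map (.subtype _), y i ≤ x i := by
    simpa using hdom ⟨y, hmem.2 hy⟩
  obtain ⟨i₀, hi₀, -⟩ := hdom' z hz
  obtain ⟨t, ht, -⟩ := hsurj hi₀
  have hmap {t} (ht : t ∈ σ) : t.1 ∈ σ.map (.subtype _) := Finset.mem_map_of_mem _ ht
  obtain ⟨μ, hμJ, hμ⟩ := exists_cell_bounds ⟨t.1, hmap ht⟩ hσ hdom'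
  refine ⟨t, hmem.1 t.2, fun i => ?_⟩
  by_cases hi : i ∈ J
  · obtain ⟨t', ht', hct'⟩ := hsurj hi
    refine Or.inr ⟨t', hmem.1 t'.2, hct', fun j => ?_⟩
    have hj := hμ t (hmap ht) j
    have hj' := hμ t' (hmap ht') j
    rw [abs_sub_le_iff, sub_le_iff_le_add, sub_le_iff_le_add]
    norm_cast
    lia
  · simpa [hμJ i hi] using Or.inl (hμ t (hmap ht) i).2

variable [Nonempty I] {F : I → Set (I → ℝ)}

lemma exists_approx_mem_of_stdSimplex_subset_iUnion (hF : stdSimplex ℝ I ⊆ ⋃ i, F i) {N : ℕ}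
    (hN : N ≠ 0) : ∃ x ∈ stdSimplex ℝ I, ∀ i,
      x i ≤ Fintype.card I / N ∨ ∃ x' ∈ F i, dist x x' ≤ Fintype.card I / N := by
  have hNpos : (0 : ℝ) < N := by positivity
  let p (t : I → ℕ) (i : I) : ℝ := t i / N
  have hp {t : I → ℕ} (ht : ∑ i, t i = N) : p t ∈ stdSimplex ℝ I := by
    refine ⟨fun i => by positivity, ?_⟩
    rw [← sum_div, div_eq_one_iff_eq hNpos.ne']
    exact_mod_cast ht
  have hcolor (t : I → ℕ) : ∃ i, ∑ i, t i = N → p t ∈ F i := by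
    by_cases ht : ∑ i, t i = N
    · exact (Set.mem_iUnion.1 (hF (hp ht))).imp fun i hi _ => hi
    · exact ⟨Classical.arbitrary I, fun h => absurd h ht⟩
  choose c hc using hcolor
  obtain ⟨t, ht, hnear⟩ := exists_lattice_point_near_colors N c
  refine ⟨p t, hp ht, fun i => (hnear i).imp (fun hi => ?_) fun ⟨t', ht', hct', hdist⟩ => ?_⟩
  · exact div_le_div_of_nonneg_right (by exact_mod_cast hi) hNpos.le
  · refine ⟨p t', hct' ▸ hc t' ht', (dist_pi_le_iff (by positivity)).2 fun j => ?_⟩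
    rw [Real.dist_eq, ← sub_div, abs_div, abs_of_pos hNpos]
    exact div_le_div_of_nonneg_right (hdist j) hNpos.le

theorem exists_mem_stdSimplex_forall_eq_zero_or_mem (hclosed : ∀ i, IsClosed (F i))
    (hF : stdSimplex ℝ I ⊆ ⋃ i, F i) : ∃ x ∈ stdSimplex ℝ I, ∀ i, x i = 0 ∨ x ∈ F i := by
  choose u huΔ hu using fun n : ℕ => exists_approx_mem_of_stdSimplex_subset_iUnion hF n.succ_ne_zero
  obtain ⟨x, hx, φ, hφ, hlim⟩ := (isCompact_stdSimplex ℝ I).tendsto_subseq huΔ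
  have hmesh : Tendsto (fun n => (Fintype.card I : ℝ) / (φ n).succ) atTop (𝓝 0) := by
    refine (tendsto_const_nhds.div_atTop tendsto_natCast_atTop_atTop).comp ?_
    exact (tendsto_add_atTop_nat 1).comp hφ.tendsto_atTop
  refine ⟨x, hx, fun i => or_iff_not_imp_left.2 fun hxi => ?_⟩
  have hxi_pos : 0 < x i := (hx.1 i).lt_of_ne' hxi
  have hlarge : ∀ᶠ n in atTop, (Fintype.card I : ℝ) / (φ n).succ < u (φ n) i :=
    hmesh.eventually_lt ((tendsto_pi_nhds.1 hlim) i) hxi_pos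
  refine (hclosed i).closure_subset (Metric.mem_closure_iff.2 fun ε hε => ?_)
  have hclose : ∀ᶠ n in atTop, dist (u (φ n)) x + Fintype.card I / (φ n).succ < ε := by
    have := (tendsto_iff_dist_tendsto_zero.1 hlim).add hmesh
    exact this.eventually_lt_const (by simpa using hε)
  obtain ⟨n, hn_large, hn_close⟩ := (hlarge.and hclose).exists
  obtain ⟨x', hx', hdist⟩ := (hu (φ n) i).resolve_left hn_large.not_ge
  refine ⟨x', hx', (dist_triangle_left x x' (u (φ n))).trans_lt ?_⟩
  exact (add_le_add_right hdist _).trans_lt hn_close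

theorem exists_isFixedPt_stdSimplex {f : (I → ℝ) → I → ℝ}
    (hf : ContinuousOn f (stdSimplex ℝ I))
    (hmaps : Set.MapsTo f (stdSimplex ℝ I) (stdSimplex ℝ I)) :
    ∃ x ∈ stdSimplex ℝ I, IsFixedPt f x := by
  let F (i : I) : Set (I → ℝ) := {x ∈ stdSimplex ℝ I | x i ≤ f x i}
  have hclosed (i : I) : IsClosed (F i) := (isClosed_stdSimplex ℝ I).isClosed_le
    (continuous_apply i).continuousOn ((continuous_apply i).comp_continuousOn hf)
  have hcover : stdSimplex ℝ I ⊆ ⋃ i, F i := fun x hx => by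
    obtain ⟨i, -, hi⟩ := exists_le_of_sum_le univ_nonempty (hx.2.trans (hmaps hx).2.symm).le
    exact Set.mem_iUnion.2 ⟨i, hx, hi⟩
  obtain ⟨x, hx, hxF⟩ := exists_mem_stdSimplex_forall_eq_zero_or_mem hclosed hcover
  have hle (i : I) : x i ≤ f x i :=
    (hxF i).elim (fun h => h.trans_le ((hmaps hx).1 i)) fun h => h.2
  have heq := (sum_eq_sum_iff_of_le fun i _ => hle i).1 (hx.2.trans (hmaps hx).2.symm)
  exact ⟨x, hx, funext fun i => (heq i (mem_univ i)).symm⟩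

end Brouwer

section Schauder

lemma exists_sum_partitionOfUnity_smul_eq {ι X E : Type*} [Fintype ι] [TopologicalSpace X]
    [AddCommGroup E] [Module ℝ E] [TopologicalSpace E] [ContinuousAdd E] [ContinuousSMul ℝ E]
    {C : Set E} {s : Set X} {Φ : E → X} (hne : C.Nonempty) (hconv : Convex ℝ C)
    (hcont : ContinuousOn Φ C) (hmaps : Set.MapsTo Φ C s) (ρ : PartitionOfUnity ι X s)
    {p : ι → E} (hp : ∀ i, p i ∈ C) : ∃ x ∈ C, ∑ i, ρ i (Φ x) • p i = x := by
  have hsum {y : X} (hy : y ∈ s) : ∑ i, ρ i y = 1 :=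
    (finsum_eq_sum_of_fintype _).symm.trans (ρ.sum_eq_one hy)
  obtain ⟨z, hz⟩ := hne
  have : Nonempty ι := by
    by_contra! hι
    simpa using hsum (hmaps hz)
  let g (w : ι → ℝ) : E := ∑ i, w i • p i
  have hgC : Set.MapsTo g (stdSimplex ℝ ι) C := fun w hw =>
    hconv.sum_mem (fun i _ => hw.1 i) hw.2 fun i _ => hp i
  have hg : Continuous g := by fun_prop
  have hΦg : ContinuousOn (fun w => Φ (g w)) (stdSimplex ℝ ι) := hcont.comp hg.continuousOn hgC
  obtain ⟨w, hw, hfix⟩ := exists_isFixedPt_stdSimplex (f := fun w i => ρ i (Φ (g w)))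
    (continuousOn_pi.2 fun i => (ρ i).continuous.comp_continuousOn hΦg)
    fun w hw => ⟨fun i => ρ.nonneg i _, hsum (hmaps (hgC hw))⟩
  exact ⟨g w, hgC hw, congrArg g hfix⟩

lemma exists_dist_map_lt {Y : Type*} [NormedAddCommGroup Y] [NormedSpace ℝ Y] {C : Set Y}
    {Φ : Y → Y} (hne : C.Nonempty) (hconv : Convex ℝ C) (hmaps : Set.MapsTo Φ C C)
    (hcont : ContinuousOn Φ C) (hcompact : IsCompact (closure (Φ '' C))) {ε : ℝ} (hε : 0 < ε) :
    ∃ x ∈ C, dist x (Φ x) < ε := by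
  have hcover : closure (Φ '' C) ⊆ ⋃ y ∈ Φ '' C, Metric.ball y ε := fun z hz => by
    obtain ⟨y, hy, hzy⟩ := Metric.mem_closure_iff.1 hz ε hε
    exact Set.mem_biUnion hy hzy
  obtain ⟨A, hAsub, hAfin, hAcover⟩ :=
    hcompact.elim_finite_subcover_image (fun _ _ => Metric.isOpen_ball) hcover
  have := hAfin.fintype
  obtain ⟨ρ, hρ⟩ := PartitionOfUnity.exists_isSubordinate isClosed_closure
    (fun a : A => Metric.ball (a : Y) ε) (fun _ => Metric.isOpen_ball)
    (hAcover.trans_eq (Set.biUnion_eq_iUnion _ _))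
  have hmaps_closure : Set.MapsTo Φ C (closure (Φ '' C)) :=
    (Set.mapsTo_image Φ C).mono_right subset_closure
  obtain ⟨x, hxC, hx⟩ := exists_sum_partitionOfUnity_smul_eq hne hconv hcont hmaps_closure ρ
    (p := fun a : A => (a : Y)) fun a => hmaps.image_subset (hAsub a.2)
  have hproj : ∑ᶠ a, ρ a (Φ x) • (a : Y) ∈ Metric.ball (Φ x) ε :=
    ρ.finsum_smul_mem_convex (g := fun a _ => (a : Y)) (hmaps_closure hxC)
      (fun a ha => Metric.mem_ball_comm.1 (hρ a (subset_tsupport _ ha))) (convex_ball _ _)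
  rw [finsum_eq_sum_of_fintype, hx] at hproj
  exact ⟨x, hxC, hproj⟩

lemma exists_isFixedPt_of_forall_exists_dist_lt {X : Type*} [MetricSpace X] {C : Set X} {Φ : X → X}
    (hclosed : IsClosed C) (hmaps : Set.MapsTo Φ C C) (hcont : ContinuousOn Φ C)
    (hcompact : IsCompact (closure (Φ '' C))) (happrox : ∀ ε > 0, ∃ x ∈ C, dist x (Φ x) < ε) :
    ∃ x ∈ C, IsFixedPt Φ x := by
  obtain ⟨ε, -, hε_pos, hε⟩ := exists_seq_strictAnti_tendsto (0 : ℝ)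
  choose u huC hu using fun n => happrox (ε n) (hε_pos n)
  obtain ⟨y, hy, φ, hφ, hlim⟩ :=
    hcompact.tendsto_subseq fun n => subset_closure (Set.mem_image_of_mem Φ (huC n))
  have hyC : y ∈ C := closure_minimal hmaps.image_subset hclosed hy
  have hdist : Tendsto (fun n => dist (u (φ n)) (Φ (u (φ n)))) atTop (𝓝 0) :=
    squeeze_zero (fun _ => dist_nonneg) (fun n => (hu (φ n)).le) (hε.comp hφ.tendsto_atTop)
  have hu_lim : Tendsto (u ∘ φ) atTop (𝓝[C] y) :=
    tendsto_nhdsWithin_iff.2 ⟨(tendsto_iff_of_dist hdist).2 hlim, .of_forall fun n => huC (φ n)⟩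
  exact ⟨y, hyC, tendsto_nhds_unique ((hcont y hyC).tendsto.comp hu_lim) hlim⟩

end Schauder

end SchauderFixedPoint

theorem stmt4_general {Y : Type*} [NormedAddCommGroup Y] [NormedSpace ℝ Y]
    (C : Set Y) (hne : C.Nonempty) (hcl : IsClosed C) (hconv : Convex ℝ C) (Φ : Y → Y)
    (hmap : Set.MapsTo Φ C C) (hcont : ContinuousOn Φ C) (hcp : IsCompact (closure (Φ '' C))) :
    ∃ x ∈ C, Φ x = x :=
  SchauderFixedPoint.exists_isFixedPt_of_forall_exists_dist_lt hcl hmap hcont hcp fun _ hε =>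
    SchauderFixedPoint.exists_dist_map_lt hne hconv hmap hcont hcp hε

/-- Schauder fixed point theorem: a continuous self-map of a nonempty closed bounded
convex subset of a Banach space whose image is relatively compact has a fixed point. -/
theorem stmt4 {Y : Type*} [NormedAddCommGroup Y] [NormedSpace ℝ Y] [CompleteSpace Y]
    (C : Set Y) (hne : C.Nonempty) (hcl : IsClosed C) (hbd : Bornology.IsBounded C)
    (hconv : Convex ℝ C) (Φ : Y → Y) (hmap : Set.MapsTo Φ C C) (hcont : ContinuousOn Φ C)
    (hcp : IsCompact (closure (Φ '' C))) :
    ∃ x ∈ C, Φ x = x := by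
  exact stmt4_general C hne hcl hconv Φ hmap hcont hcp
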